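/- Let f : I ⊆ (0,∞) → (0,∞) be differentiable on I°, a, b ∈ I° with a < b, f' integrable on [a,b], and let |f'|^q be s-geometrically convex on [a,b] for some q ≥ 1 and s ∈ (0,1]. If |f'(a)| ≤ 1 ≤ |f'(b)|, then |f(√(ab))² − (1/(ln b − ln a)) ∫_a^b (f(x)/x)·f(ab/x) dx| ≤ ln(b/a)·(1/2)^{2−1/q}·[ b·|f'(b)|·M₁·h₂(θ)^{1/q} + a·|f'(a)|^s·|f'(b)|^{1−s}·M₂·h₂(ϑ)^{1/q} ]. -/

import Mathlib

/-!
Write `c = log (b / a) / 2`. In the logarithmic coordinate `t ∈ [0, 1]`, the points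
`x(t) = exp (log a + c t)` and `y(t) = exp (log b - c t)` satisfy `x(t) y(t) = a b` and run from
`a` and `b` to the geometric mean `√(ab)`. With `h(t) = f (x(t)) f (y(t))`, the symmetry of the
integrand under `x ↦ ab / x` turns the left-hand side into `|h 1 - ∫₀¹ h|` (`average_eq`), and this
equals `|∫₀¹ t h'(t) dt|` by parts, so it is at most `∫₀¹ t k(t) dt` whenever `|h'| ≤ k`
(`abs_sub_integral_le`).

Geometric convexity at `a, b`, together with the exponent comparison `rpow_mul_rpow_le`, which uses
`|f' a| ≤ 1 ≤ |f' b|`, bounds `|f' x| x` by an exponential in `t` (`abs_deriv_mul_le`). What remains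
are the integrals `∫₀¹ t exp (p t) dt` with `p = ± log ρ / 2`,
`ρ = a |f' a| ^ s / (b |f' b| ^ s)`. The power mean inequality for the weight `t` passes from
exponent `1` to `q`, and `∫₀¹ t exp (q p t) dt = h₂ (exp (q p))` (`integral_mul_exp_le`).

The degenerate case `f' a = 0`, where `h₂` would be evaluated at the junk value `0`, cannot occur
(`deriv_left_ne_zero`).
-/

open Real MeasureTheory Set intervalIntegral

noncomputable def h₂ (u : ℝ) : ℝ :=
  if u = 1 then 1/2 else (u * Real.log u - u + 1) / (Real.log u) ^ 2

/-! ### The two-point average in logarithmic coordinates -/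

/-- Integration by parts in the form of a mean value inequality for
`t ↦ t * h t - ∫₀ᵗ h`, whose derivative is `t * h' t`. No integrability of `h'` is needed, only the
continuous majorant `k`. -/
lemma abs_sub_integral_le {h h' k : ℝ → ℝ} {U : Set ℝ} (hU : IsOpen U)
    (hIU : Set.Icc (0:ℝ) 1 ⊆ U) (hh : ∀ t ∈ U, HasDerivAt h (h' t) t) (hk : Continuous k)
    (hbd : ∀ t ∈ Set.Icc (0:ℝ) 1, |h' t| ≤ k t) :
    |h 1 - ∫ t in (0:ℝ)..1, h t| ≤ ∫ t in (0:ℝ)..1, t * k t := by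
  have hc : ContinuousOn h U := fun t ht => (hh t ht).continuousAt.continuousWithinAt
  have hD : ∀ t ∈ Set.Icc (0:ℝ) 1,
      HasDerivAt (fun t => t * h t - ∫ τ in (0:ℝ)..t, h τ) (t * h' t) t := by
    intro t ht
    have hi : IntervalIntegrable h volume 0 t := by
      apply ContinuousOn.intervalIntegrable
      rw [Set.uIcc_of_le ht.1]
      exact hc.mono fun x hx => hIU ⟨hx.1, hx.2.trans ht.2⟩
    have h2 := intervalIntegral.integral_hasDerivAt_right hi
      (hc.stronglyMeasurableAtFilter hU t (hIU ht)) (hh t (hIU ht)).continuousAt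
    have h3 := ((hasDerivAt_id t).mul (hh t (hIU ht))).sub h2
    refine h3.congr_deriv ?_
    simp
  have hkc : Continuous fun t : ℝ => t * k t := continuous_id.mul hk
  have key := image_norm_le_of_norm_deriv_right_le_deriv_boundary
    (f := fun t => t * h t - ∫ τ in (0:ℝ)..t, h τ) (a := 0) (b := 1)
    (f' := fun t => t * h' t)
    (fun t ht => (hD t ht).continuousAt.continuousWithinAt)
    (fun t ht => (hD t ⟨ht.1, ht.2.le⟩).hasDerivWithinAt)
    (B := fun t => ∫ τ in (0:ℝ)..t, τ * k τ) (B' := fun t => t * k t)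
    (by simp)
    (fun t => (hkc.integral_hasStrictDerivAt 0 t).hasDerivAt)
    (fun t ht => by
      rw [Real.norm_eq_abs, abs_mul, abs_of_nonneg ht.1]
      exact mul_le_mul_of_nonneg_left (hbd t ⟨ht.1, ht.2.le⟩) ht.1)
    (x := 1) (by simp)
  simpa using key

/-- The substitution `x = exp u` makes the integrand `f (exp u) * f (exp (A + B - u))` with
`A = log a`, `B = log b`; it is symmetric about `(A + B) / 2`, so its average over `[A, B]` is its
average over the left half. -/
lemma average_eq {f : ℝ → ℝ} {a b : ℝ} (ha : 0 < a) (hab : a < b)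
    (hf : ContinuousOn f (Set.Icc a b)) :
    (1 / (log b - log a)) * ∫ x in a..b, (f x / x) * f (a * b / x) =
      ∫ t in (0:ℝ)..1, f (exp (log a + (log b - log a) / 2 * t)) *
        f (exp (log b - (log b - log a) / 2 * t)) := by
  have hb : 0 < b := ha.trans hab
  set A := log a with hA
  set B := log b with hB
  have hAB : A < B := Real.log_lt_log ha hab
  have heA : exp A = a := Real.exp_log ha
  have heB : exp B = b := Real.exp_log hb
  have hmem : ∀ u ∈ Set.Icc A B, exp u ∈ Set.Icc a b := fun u hu =>
    ⟨heA ▸ exp_le_exp.2 hu.1, heB ▸ exp_le_exp.2 hu.2⟩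
  set G : ℝ → ℝ := fun u => f (exp u) * f (exp (A + B - u)) with hG
  have hGc : ContinuousOn G (Set.Icc A B) := by
    refine (hf.comp (by fun_prop) hmem).mul (hf.comp (by fun_prop) fun u hu => hmem _ ?_)
    constructor <;> linarith [hu.1, hu.2]
  have hsub : ∫ x in a..b, (f x / x) * f (a * b / x) = ∫ u in A..B, G u := by
    have hφ : ContinuousOn (fun x => (f x / x) * f (a * b / x)) (Set.Icc a b) := by
      have hne : ∀ x ∈ Set.Icc a b, x ≠ 0 := fun x hx => (ha.trans_le hx.1).ne'
      refine (hf.div continuousOn_id hne).mul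
        (hf.comp (continuousOn_const.div continuousOn_id hne) fun x hx => ?_)
      have hx0 : 0 < x := ha.trans_le hx.1
      constructor
      · show a ≤ a * b / x
        rw [le_div_iff₀ hx0]
        exact mul_le_mul_of_nonneg_left hx.2 ha.le
      · show a * b / x ≤ b
        rw [div_le_iff₀ hx0, mul_comm]
        exact mul_le_mul_of_nonneg_left hx.1 hb.le
    have := intervalIntegral.integral_comp_mul_deriv'' (a := A) (b := B) (f := exp) (f' := exp)
      (g := fun x => (f x / x) * f (a * b / x)) (by fun_prop)
      (fun x _ => (Real.hasDerivAt_exp x).hasDerivWithinAt) (by fun_prop)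
      (hφ.mono (by
        rw [Set.uIcc_of_le hAB.le]
        rintro _ ⟨u, hu, rfl⟩
        exact hmem u hu))
    rw [heA, heB] at this
    rw [← this]
    apply intervalIntegral.integral_congr
    intro u _
    have : a * b / exp u = exp (A + B - u) := by rw [exp_sub, exp_add, heA, heB]
    simp only [hG, Function.comp, this]
    field_simp
  set m := (A + B) / 2 with hm
  have hAm : A ≤ m := by linarith
  have hmB : m ≤ B := by linarith
  have hsplit : ∫ u in A..B, G u = 2 * ∫ u in A..m, G u := by
    have h1 : IntervalIntegrable G volume A m := by
      apply ContinuousOn.intervalIntegrable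
      rw [Set.uIcc_of_le hAm]
      exact hGc.mono (Set.Icc_subset_Icc_right hmB)
    have h2 : IntervalIntegrable G volume m B := by
      apply ContinuousOn.intervalIntegrable
      rw [Set.uIcc_of_le hmB]
      exact hGc.mono (Set.Icc_subset_Icc_left hAm)
    have h3 : ∫ u in m..B, G u = ∫ u in A..m, G u := by
      have := intervalIntegral.integral_comp_sub_left (a := A) (b := m) G (A + B)
      rw [show A + B - m = m by rw [hm]; ring, show A + B - A = B by ring] at this
      rw [← this]
      apply intervalIntegral.integral_congr
      intro u _
      simp only [hG]
      rw [show A + B - (A + B - u) = u by ring, mul_comm]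
    rw [← intervalIntegral.integral_add_adjacent_intervals h1 h2, h3]
    ring
  have hcomp := intervalIntegral.integral_comp_add_mul (a := 0) (b := 1) (c := (B - A) / 2) G
    (by linarith) A
  rw [show A + (B - A) / 2 * 0 = A by ring, show A + (B - A) / 2 * 1 = m by rw [hm]; ring] at hcomp
  have hrw : ∀ t : ℝ, G (A + (B - A) / 2 * t) =
      f (exp (A + (B - A) / 2 * t)) * f (exp (B - (B - A) / 2 * t)) := by
    intro t
    simp only [hG]
    rw [show A + B - (A + (B - A) / 2 * t) = B - (B - A) / 2 * t by ring]
  simp only [hrw] at hcomp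
  rw [hcomp, hsub, hsplit, smul_eq_mul]
  have : B - A ≠ 0 := by linarith
  field_simp

/-! ### The integrals behind `h₂` -/

lemma integral_mul_exp (r : ℝ) : ∫ t in (0:ℝ)..1, t * exp (r * t) = h₂ (exp r) := by
  unfold h₂
  rcases eq_or_ne r 0 with rfl | hr
  · simp
  · rw [if_neg (by simpa using hr), Real.log_exp]
    have hd : ∀ t ∈ Set.uIcc (0:ℝ) 1,
        HasDerivAt (fun t => (r * t - 1) * exp (r * t) / r ^ 2) (t * exp (r * t)) t := by
      intro t _
      have h1 : HasDerivAt (fun t : ℝ => r * t) r t := by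
        simpa using (hasDerivAt_id t).const_mul r
      refine (((h1.sub_const 1).mul h1.exp).div_const (r ^ 2)).congr_deriv ?_
      field_simp
      ring
    rw [intervalIntegral.integral_eq_sub_of_hasDerivAt hd
      (Continuous.intervalIntegrable (by fun_prop) _ _)]
    simp
    ring

/-- The power mean inequality for the function `exp (p * t)` and the probability density `2 * t` on
`[0, 1]`, proved by integrating a tangent line inequality; this covers `q = 1` as well. -/
lemma integral_mul_exp_le {q : ℝ} (hq : 1 ≤ q) (p : ℝ) :
    ∫ t in (0:ℝ)..1, t * exp (p * t) ≤
      (1 / 2 : ℝ) ^ (1 - 1 / q) * h₂ (exp (q * p)) ^ (1 / q) := by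
  have hq0 : 0 < q := by linarith
  set J := ∫ t in (0:ℝ)..1, t * exp (p * t) with hJ
  have hJpos : 0 < J := by
    apply intervalIntegral.intervalIntegral_pos_of_pos_on
    · exact Continuous.intervalIntegrable (by fun_prop) _ _
    · intro t ht
      exact mul_pos ht.1 (exp_pos _)
    · norm_num
  have hm : 0 < 2 * J := by linarith
  -- the tangent line of `x ↦ x ^ q` at the weighted mean `2 * J`
  have htan : ∀ t : ℝ, (2 * J) ^ q * (1 + q * (exp (p * t) / (2 * J) - 1)) ≤ exp (q * p * t) := by
    intro t
    have h1 := one_add_mul_self_le_rpow_one_add (s := exp (p * t) / (2 * J) - 1)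
      (by have := div_pos (exp_pos (p * t)) hm; linarith) hq
    have h2 : (2 * J) ^ q * (1 + (exp (p * t) / (2 * J) - 1)) ^ q = exp (q * p * t) := by
      rw [← Real.mul_rpow hm.le (by ring_nf; positivity)]
      rw [show 2 * J * (1 + (exp (p * t) / (2 * J) - 1)) = exp (p * t) by field_simp; ring,
        ← Real.exp_mul]
      congr 1
      ring
    rw [← h2]
    exact mul_le_mul_of_nonneg_left h1 (by positivity)
  have hint : ∫ t in (0:ℝ)..1,
        ((2 * J) ^ q * (1 - q) * t + (2 * J) ^ q * (q / (2 * J)) * (t * exp (p * t))) ≤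
      ∫ t in (0:ℝ)..1, t * exp (q * p * t) := by
    apply intervalIntegral.integral_mono_on (by norm_num)
    · exact Continuous.intervalIntegrable (by fun_prop) _ _
    · exact Continuous.intervalIntegrable (by fun_prop) _ _
    · intro t ht
      have := mul_le_mul_of_nonneg_left (htan t) ht.1
      refine le_trans (le_of_eq ?_) this
      ring
  rw [integral_mul_exp, intervalIntegral.integral_add
    (Continuous.intervalIntegrable (by fun_prop) _ _)
    (Continuous.intervalIntegrable (by fun_prop) _ _),
    intervalIntegral.integral_const_mul, intervalIntegral.integral_const_mul, ← hJ,
    integral_id] at hint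
  have hle : (2 * J) ^ q ≤ 2 * h₂ (exp (q * p)) := by
    have : (2 * J) ^ q * (1 - q) * ((1 ^ 2 - 0 ^ 2) / 2) + (2 * J) ^ q * (q / (2 * J)) * J
        = (2 * J) ^ q / 2 := by
      field_simp
      ring
    linarith
  have hh : 0 ≤ h₂ (exp (q * p)) := by
    have : 0 ≤ (2 * J) ^ q := by positivity
    linarith
  have h3 : 2 * J ≤ (2 * h₂ (exp (q * p))) ^ (1 / q) := by
    have := Real.rpow_le_rpow (by positivity) hle (z := 1 / q) (by positivity)
    rwa [← Real.rpow_mul hm.le, mul_one_div_cancel hq0.ne', Real.rpow_one] at this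
  rw [Real.mul_rpow (by norm_num) hh] at h3
  have h4 : (1 / 2 : ℝ) ^ (1 - 1 / q) = 2 ^ (1 / q) / 2 := by
    rw [Real.rpow_sub (by norm_num), Real.rpow_one, one_div (2:ℝ), Real.inv_rpow (by norm_num)]
    field_simp
  rw [h4]
  linarith

/-! ### Consequences of geometric convexity -/

/-- Linearization of the exponents: `s * l ≤ l ≤ l ^ s` lowers the exponent of `α ≤ 1`, and
Bernoulli's inequality `(1 - l) ^ s ≤ 1 - s * l` raises the exponent of `β ≥ 1`. -/
lemma rpow_mul_rpow_le {α β s l : ℝ} (hα : 0 < α) (hα1 : α ≤ 1) (hβ : 1 ≤ β)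
    (hs : s ∈ Set.Ioc (0:ℝ) 1) (hl : l ∈ Set.Icc (0:ℝ) 1) :
    α ^ (l ^ s) * β ^ ((1 - l) ^ s) ≤ α ^ (s * l) * β ^ (1 - s * l) := by
  have h1 : s * l ≤ l ^ s := by
    have : l ≤ l ^ s := by
      have := Real.rpow_le_rpow_of_exponent_ge' hl.1 hl.2 hs.1.le hs.2
      rwa [Real.rpow_one] at this
    nlinarith [hs.2, hl.1]
  have h2 : (1 - l) ^ s ≤ 1 - s * l := by
    have := rpow_one_add_le_one_add_mul_self (s := -l) (by linarith [hl.2]) hs.1.le hs.2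
    calc (1 - l) ^ s = (1 + -l) ^ s := by ring_nf
      _ ≤ _ := this
      _ = _ := by ring
  exact mul_le_mul (Real.rpow_le_rpow_of_exponent_ge hα hα1 h1)
    (Real.rpow_le_rpow_of_exponent_le hβ h2) (by positivity) (by positivity)

/-- If `f' a = 0`, geometric convexity forces `f' = 0` on `[a, b)`, so `f` is constant on `[a, b]`
and its one-sided derivative at `b` vanishes, contrary to `1 ≤ |f' b|`. -/
lemma deriv_left_ne_zero {f f' : ℝ → ℝ} {a b q s : ℝ} (ha : 0 < a) (hab : a < b)
    (hf : ∀ x ∈ Set.Icc a b, HasDerivAt f (f' x) x) (hq : 1 ≤ q)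
    (hconv : ∀ x ∈ Set.Icc a b, ∀ y ∈ Set.Icc a b, ∀ l ∈ Set.Icc (0:ℝ) 1,
      |f' (x ^ l * y ^ (1 - l))| ^ q ≤ (|f' x| ^ q) ^ (l ^ s) * (|f' y| ^ q) ^ ((1 - l) ^ s))
    (hfb : 1 ≤ |f' b|) : f' a ≠ 0 := by
  intro h0
  have hb : 0 < b := ha.trans hab
  have hq0 : q ≠ 0 := by linarith
  have hz : ∀ x ∈ Set.Ico a b, f' x = 0 := by
    intro x hx
    have hx0 : 0 < x := ha.trans_le hx.1
    have hL : 0 < log b - log a := sub_pos.2 (Real.log_lt_log ha hab)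
    have hxb : 0 < log b - log x := sub_pos.2 (Real.log_lt_log hx0 hx.2)
    have hax : 0 ≤ log x - log a := sub_nonneg.2 (Real.log_le_log ha hx.1)
    -- the weight for which `a ^ l * b ^ (1 - l) = x`; it is positive because `x < b`
    set l := (log b - log x) / (log b - log a) with hl
    have hl0 : 0 < l := div_pos hxb hL
    have hl1 : l ≤ 1 := (div_le_one hL).2 (by linarith)
    have hxe : a ^ l * b ^ (1 - l) = x := by
      rw [Real.rpow_def_of_pos ha, Real.rpow_def_of_pos hb, ← exp_add]
      rw [show log a * l + log b * (1 - l) = log x by rw [hl]; field_simp; ring, exp_log hx0]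
    have := hconv a ⟨le_rfl, hab.le⟩ b ⟨hab.le, le_rfl⟩ l ⟨hl0.le, hl1⟩
    rw [hxe, h0, abs_zero, Real.zero_rpow hq0, Real.zero_rpow (by positivity), zero_mul] at this
    have h1 : |f' x| ^ q = 0 := le_antisymm this (by positivity)
    rw [Real.rpow_eq_zero (abs_nonneg _) hq0] at h1
    exact abs_eq_zero.1 h1
  have hconst : ∀ x ∈ Set.Icc a b, f x = f a :=
    constant_of_has_deriv_right_zero
      (fun x hx => (hf x hx).continuousAt.continuousWithinAt)
      (fun x hx => hz x hx ▸ (hf x ⟨hx.1, hx.2.le⟩).hasDerivWithinAt)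
  have hbm : b ∈ Set.Icc a b := ⟨hab.le, le_rfl⟩
  have h1 : HasDerivWithinAt f 0 (Set.Icc a b) b :=
    (hasDerivWithinAt_const b _ (f a)).congr hconst (hconst b hbm)
  have h2 := (uniqueDiffOn_Icc hab b hbm).eq_deriv _ (hf b hbm).hasDerivWithinAt h1
  rw [h2, abs_zero] at hfb
  linarith

/-- At the geometric mean of `a` and `b` with weights `l`, `1 - l`, the derivative of
`u ↦ f (exp u)` has absolute value at most `b * |f' b| * ρ ^ l`, where
`ρ = a * |f' a| ^ s / (b * |f' b| ^ s)`. -/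
lemma abs_deriv_mul_le {f' : ℝ → ℝ} {a b q s l : ℝ} (ha : 0 < a) (hab : a < b) (hq : 1 ≤ q)
    (hs : s ∈ Set.Ioc (0:ℝ) 1)
    (hconv : ∀ x ∈ Set.Icc a b, ∀ y ∈ Set.Icc a b, ∀ l ∈ Set.Icc (0:ℝ) 1,
      |f' (x ^ l * y ^ (1 - l))| ^ q ≤ (|f' x| ^ q) ^ (l ^ s) * (|f' y| ^ q) ^ ((1 - l) ^ s))
    (h0 : f' a ≠ 0) (hfa : |f' a| ≤ 1) (hfb : 1 ≤ |f' b|) (hl : l ∈ Set.Icc (0:ℝ) 1) :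
    |f' (exp (log a * l + log b * (1 - l)))| * exp (log a * l + log b * (1 - l)) ≤
      b * |f' b| * exp (log (a * |f' a| ^ s / (b * |f' b| ^ s)) * l) := by
  have hb : 0 < b := ha.trans hab
  have hq0 : 0 < q := by linarith
  have hα : 0 < |f' a| := abs_pos.2 h0
  have hβ : 0 < |f' b| := by linarith
  have hxe : a ^ l * b ^ (1 - l) = exp (log a * l + log b * (1 - l)) := by
    rw [Real.rpow_def_of_pos ha, Real.rpow_def_of_pos hb, ← exp_add]
  have h1 := hconv a ⟨le_rfl, hab.le⟩ b ⟨hab.le, le_rfl⟩ l hl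
  have hcomm : ∀ z : ℝ, 0 < z → ∀ w : ℝ, (z ^ q) ^ w = (z ^ w) ^ q := by
    intro z hz w
    rw [← Real.rpow_mul hz.le, ← Real.rpow_mul hz.le, mul_comm]
  rw [hcomm _ hα, hcomm _ hβ, ← Real.mul_rpow (by positivity) (by positivity),
    Real.rpow_le_rpow_iff (abs_nonneg _) (by positivity) hq0] at h1
  have h2 := h1.trans (rpow_mul_rpow_le hα hfa hfb hs hl)
  rw [hxe] at h2
  refine (mul_le_mul_of_nonneg_right h2 (exp_pos _).le).trans (le_of_eq ?_)
  -- both sides are exponentials of the same linear combination of logarithms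
  rw [Real.log_div (by positivity) (by positivity), Real.log_mul (by positivity) (by positivity),
    Real.log_mul (by positivity) (by positivity), Real.log_rpow hα, Real.log_rpow hβ,
    Real.rpow_def_of_pos hα, Real.rpow_def_of_pos hβ, ← exp_add, ← exp_add]
  have hbβ : b * |f' b| = exp (log b + log |f' b|) := by
    rw [exp_add, Real.exp_log hb, Real.exp_log hβ]
  rw [hbβ, ← exp_add]
  congr 1
  ring

/-! ### The inequality -/

set_option maxHeartbeats 1600000 in
theorem stmt_8 (I : Set ℝ) (hI : I ⊆ Set.Ioi (0:ℝ)) (hI' : I.OrdConnected)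
    (f f' : ℝ → ℝ) (a b : ℝ) (ha : a ∈ interior I) (hb : b ∈ interior I) (hab : a < b)
    (hf : ∀ x ∈ interior I, HasDerivAt f (f' x) x)
    (hint : IntervalIntegrable f' volume a b)
    (hpos : ∀ x ∈ I, 0 < f x)
    (q s : ℝ) (hq : 1 ≤ q) (hs : s ∈ Set.Ioc (0:ℝ) 1)
    (hconv : ∀ x ∈ Set.Icc a b, ∀ y ∈ Set.Icc a b, ∀ l ∈ Set.Icc (0:ℝ) 1,
      |f' (x ^ l * y ^ (1 - l))| ^ q ≤ (|f' x| ^ q) ^ (l ^ s) * (|f' y| ^ q) ^ ((1 - l) ^ s))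
    (M₁ M₂ : ℝ)
    (hM₁ : IsGreatest ((fun x => |f x|) '' Set.Icc a (Real.sqrt (a*b))) M₁)
    (hM₂ : IsGreatest ((fun x => |f x|) '' Set.Icc (Real.sqrt (a*b)) b) M₂)
    (hfa : |f' a| ≤ 1) (hfb : 1 ≤ |f' b|) :
    |f (Real.sqrt (a*b)) ^ 2 - (1 / (Real.log b - Real.log a)) * ∫ x in a..b, (f x / x) * f (a * b / x)|
      ≤ Real.log (b / a) * ((1:ℝ) / 2) ^ (2 - 1 / q) *
        (b * |f' b| * M₁ * (h₂ ((a * |f' a| ^ s / (b * |f' b| ^ s)) ^ (q / 2))) ^ (1 / q)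
          + a * |f' a| ^ s * |f' b| ^ (1 - s) * M₂ * (h₂ ((b * |f' b| ^ s / (a * |f' a| ^ s)) ^ (q / 2))) ^ (1 / q)) := by
  have hJ : Set.Icc a b ⊆ interior I := hI'.interior.out ha hb
  have ha0 : 0 < a := hI (interior_subset ha)
  have hb0 : 0 < b := hI (interior_subset hb)
  have hq0 : 0 < q := by linarith
  have hfJ : ∀ x ∈ Set.Icc a b, HasDerivAt f (f' x) x := fun x hx => hf x (hJ hx)
  have hne : f' a ≠ 0 := deriv_left_ne_zero ha0 hab hfJ hq hconv hfb
  have hα : 0 < |f' a| := abs_pos.2 hne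
  have hβ : 0 < |f' b| := by linarith
  rw [average_eq ha0 hab fun x hx => (hfJ x hx).continuousAt.continuousWithinAt]
  have hLlog : log (b / a) = log b - log a := Real.log_div hb0.ne' ha0.ne'
  rw [hLlog]
  set A := log a with hA
  set B := log b with hB
  have hAB : A < B := Real.log_lt_log ha0 hab
  have heA : exp A = a := Real.exp_log ha0
  have heB : exp B = b := Real.exp_log hb0
  set c := (B - A) / 2 with hc
  have hc0 : 0 < c := by rw [hc]; linarith
  have hsqrt : Real.sqrt (a * b) = exp (A + c) := by
    rw [← heA, ← heB, ← exp_add, Real.sqrt_eq_rpow, ← Real.exp_mul]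
    congr 1
    rw [hc]
    ring
  have hsqrt' : Real.sqrt (a * b) = exp (B - c) := by
    rw [hsqrt]
    congr 1
    rw [hc]
    ring
  set ρ := a * |f' a| ^ s / (b * |f' b| ^ s) with hρ
  have hρ0 : 0 < ρ := by positivity
  have hinv : b * |f' b| ^ s / (a * |f' a| ^ s) = ρ⁻¹ := by rw [hρ, inv_div]
  set p := log ρ / 2 with hp
  have hθ : ρ ^ (q / 2) = exp (q * p) := by
    rw [Real.rpow_def_of_pos hρ0]
    congr 1
    rw [hp]
    ring
  have hϑ : (ρ⁻¹) ^ (q / 2) = exp (q * -p) := by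
    rw [Real.inv_rpow hρ0.le, hθ, ← exp_neg]
    congr 1
    ring
  have hC : b * |f' b| * ρ = a * |f' a| ^ s * |f' b| ^ (1 - s) := by
    rw [hρ, Real.rpow_sub hβ, Real.rpow_one]
    field_simp
  rw [hinv, hθ, hϑ, ← hC]
  have hX : ∀ t ∈ Set.Icc (0:ℝ) 1, exp (A + c * t) ∈ Set.Icc a (Real.sqrt (a * b)) := by
    intro t ht
    rw [hsqrt]
    constructor
    · rw [← heA]
      exact exp_le_exp.2 (by nlinarith [ht.1])
    · exact exp_le_exp.2 (by nlinarith [ht.2])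
  have hY : ∀ t ∈ Set.Icc (0:ℝ) 1, exp (B - c * t) ∈ Set.Icc (Real.sqrt (a * b)) b := by
    intro t ht
    rw [hsqrt']
    constructor
    · exact exp_le_exp.2 (by nlinarith [ht.2])
    · rw [← heB]
      exact exp_le_exp.2 (by nlinarith [ht.1])
  have hm1 : a ≤ Real.sqrt (a * b) := by simpa using (hX 0 (by simp)).2.trans' (hX 0 (by simp)).1
  have hm2 : Real.sqrt (a * b) ≤ b := (hY 0 (by simp)).1.trans (hY 0 (by simp)).2
  have hM₁0 : 0 ≤ M₁ := (abs_nonneg _).trans (hM₁.2 ⟨a, ⟨le_rfl, hm1⟩, rfl⟩)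
  have hM₂0 : 0 ≤ M₂ := (abs_nonneg _).trans (hM₂.2 ⟨b, ⟨hm2, le_rfl⟩, rfl⟩)
  have hEx : ∀ t : ℝ, HasDerivAt (fun t => exp (A + c * t)) (exp (A + c * t) * c) t := by
    intro t
    have h1 : HasDerivAt (fun t : ℝ => A + c * t) c t := by
      simpa using ((hasDerivAt_id t).const_mul c).const_add A
    exact h1.exp
  have hEy : ∀ t : ℝ, HasDerivAt (fun t => exp (B - c * t)) (exp (B - c * t) * -c) t := by
    intro t
    have h1 : HasDerivAt (fun t : ℝ => B - c * t) (-c) t := by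
      simpa using ((hasDerivAt_id t).const_mul c).const_sub B
    exact h1.exp
  have key := abs_sub_integral_le
    (h := fun t => f (exp (A + c * t)) * f (exp (B - c * t)))
    (h' := fun t => f' (exp (A + c * t)) * (exp (A + c * t) * c) * f (exp (B - c * t)) +
      f (exp (A + c * t)) * (f' (exp (B - c * t)) * (exp (B - c * t) * -c)))
    (k := fun t => c * (b * |f' b| * M₁) * exp (p * t) +
      c * (b * |f' b| * ρ * M₂) * exp (-p * t))
    (U := (fun t => exp (A + c * t)) ⁻¹' interior I ∩ (fun t => exp (B - c * t)) ⁻¹' interior I)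
    ((isOpen_interior.preimage (by fun_prop)).inter (isOpen_interior.preimage (by fun_prop)))
    (fun t ht => ⟨hJ ⟨(hX t ht).1, (hX t ht).2.trans hm2⟩,
      hJ ⟨hm1.trans (hY t ht).1, (hY t ht).2⟩⟩)
    (fun t ht => ((hf _ ht.1).comp t (hEx t)).mul ((hf _ ht.2).comp t (hEy t)))
    (by fun_prop)
    (fun t ht => by
      -- `exp (A + c * t)` has weight `1 - t / 2` at `a`, and `exp (B - c * t)` has weight `t / 2`
      have hx := abs_deriv_mul_le ha0 hab hq hs hconv hne hfa hfb (l := 1 - t / 2)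
        ⟨by linarith [ht.2], by linarith [ht.1]⟩
      have hy := abs_deriv_mul_le ha0 hab hq hs hconv hne hfa hfb (l := t / 2)
        ⟨by linarith [ht.1], by linarith [ht.2]⟩
      rw [← hρ, ← hA, ← hB, show A * (1 - t / 2) + B * (1 - (1 - t / 2)) = A + c * t by
          rw [hc]; ring,
        show log ρ * (1 - t / 2) = log ρ + -p * t by rw [hp]; ring, exp_add (log ρ),
        Real.exp_log hρ0, ← mul_assoc] at hx
      rw [← hρ, ← hA, ← hB, show A * (t / 2) + B * (1 - t / 2) = B - c * t by rw [hc]; ring,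
        show log ρ * (t / 2) = p * t by rw [hp]; ring] at hy
      have hf1 : |f (exp (A + c * t))| ≤ M₁ := hM₁.2 ⟨_, hX t ht, rfl⟩
      have hf2 : |f (exp (B - c * t))| ≤ M₂ := hM₂.2 ⟨_, hY t ht, rfl⟩
      have h1 := mul_le_mul hx hf2 (abs_nonneg _) (by positivity)
      have h2 := mul_le_mul hy hf1 (abs_nonneg _) (by positivity)
      refine (abs_add_le _ _).trans ?_
      simp only [abs_mul, abs_neg, abs_of_pos hc0, Real.abs_exp]
      linarith [mul_le_mul_of_nonneg_left h1 hc0.le, mul_le_mul_of_nonneg_left h2 hc0.le])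
  have hsplit : ∫ t in (0:ℝ)..1, t * (c * (b * |f' b| * M₁) * exp (p * t) +
        c * (b * |f' b| * ρ * M₂) * exp (-p * t)) =
      c * (b * |f' b| * M₁) * (∫ t in (0:ℝ)..1, t * exp (p * t)) +
        c * (b * |f' b| * ρ * M₂) * ∫ t in (0:ℝ)..1, t * exp (-p * t) := by
    rw [← intervalIntegral.integral_const_mul, ← intervalIntegral.integral_const_mul,
      ← intervalIntegral.integral_add (Continuous.intervalIntegrable (by fun_prop) _ _)
        (Continuous.intervalIntegrable (by fun_prop) _ _)]
    congr 1
    ext t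
    ring
  have hmid : f (Real.sqrt (a * b)) ^ 2 = f (exp (A + c * 1)) * f (exp (B - c * 1)) := by
    rw [mul_one, ← hsqrt, ← hsqrt', sq]
  rw [hmid]
  refine key.trans ?_
  rw [hsplit]
  have hi1 := mul_le_mul_of_nonneg_left (integral_mul_exp_le hq p)
    (show 0 ≤ c * (b * |f' b| * M₁) by positivity)
  have hi2 := mul_le_mul_of_nonneg_left (integral_mul_exp_le hq (-p))
    (show 0 ≤ c * (b * |f' b| * ρ * M₂) by positivity)
  refine (add_le_add hi1 hi2).trans (le_of_eq ?_)
  have hpow : (1 / 2 : ℝ) ^ (2 - 1 / q) = 1 / 2 * (1 / 2 : ℝ) ^ (1 - 1 / q) := by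
    rw [show (2 : ℝ) - 1 / q = 1 + (1 - 1 / q) by ring, Real.rpow_add (by norm_num), Real.rpow_one]
  rw [hpow, hc]
  ring
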